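/- arXiv:math/0507500 — 2 statements merged into one kernel-verified Lean document; each statement's English description precedes it below -/
import Mathlib

section
/- Let P ⊆ ℝ^n be an n-dimensional reflexive polytope with respect to ℤ^n, and let x, y be an orthogonal pair of roots of P, i.e., lattice points in the relative interiors of facets F_x, F_y with ⟨η_x, y⟩ = 0 = ⟨η_y, x⟩. Then x + y is a lattice point lying in F_x ∩ F_y. -/
/-!
The bipolar theorem writes a reflexive polytope as `P = {p | ∀ w ∈ V, -1 ≤ ⟨w, p⟩}` with `V` a set
of lattice points. If `w ∈ V` takes the value `-1` at a root `x`, then, `x` being relatively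
interior to `Fₓ`, it is constantly `-1` on `Fₓ`; as `Fₓ` spans `ℝ^n` linearly, this forces `w = ηₓ`.
By integrality every other `w ∈ V` is nonnegative at `x`, and likewise for `y`. Together with the
orthogonality relations this gives `⟨w, x + y⟩ ≥ -1` for all `w ∈ V`, so `x + y ∈ P`. Every
functional exposing `Fₓ` is a multiple of `ηₓ`, so `⟨ηₓ, x + y⟩ = -1` puts `x + y` on `Fₓ`, and
symmetrically on `F_y`.
-/

/-- The standard pairing `⟨x, y⟩ = ∑ i, x i * y i` on `ℝ^n`. -/
def dotProd {n : ℕ} (x y : Fin n → ℝ) : ℝ := ∑ i, x i * y i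

/-- A point of `ℝ^n` is a lattice point if all its coordinates are integers. -/
def IsLatticePt {n : ℕ} (x : Fin n → ℝ) : Prop := ∀ i, ∃ m : ℤ, x i = (m : ℝ)

/-- A lattice polytope is the convex hull of finitely many lattice points. -/
def IsLatticePolytope {n : ℕ} (P : Set (Fin n → ℝ)) : Prop :=
  ∃ V : Set (Fin n → ℝ), V.Finite ∧ (∀ x ∈ V, IsLatticePt x) ∧ P = convexHull ℝ V

/-- The dual polytope `P* = {y : ⟨x, y⟩ ≥ -1 for all x ∈ P}`. -/
def dualPolytope {n : ℕ} (P : Set (Fin n → ℝ)) : Set (Fin n → ℝ) :=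
  {y | ∀ x ∈ P, -1 ≤ dotProd x y}

/-- A reflexive polytope: a lattice polytope containing `0` in its interior
(hence full-dimensional) whose dual is again a lattice polytope. -/
def IsReflexive {n : ℕ} (P : Set (Fin n → ℝ)) : Prop :=
  IsLatticePolytope P ∧ (0 : Fin n → ℝ) ∈ interior P ∧ IsLatticePolytope (dualPolytope P)

/-- A face of a polytope (an exposed face). -/
def IsFaceOf {n : ℕ} (P F : Set (Fin n → ℝ)) : Prop := IsExposed ℝ P F

/-- A facet: a nonempty face of dimension `n - 1`. -/
def IsFacetOf {n : ℕ} (P F : Set (Fin n → ℝ)) : Prop :=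
  IsFaceOf P F ∧ F.Nonempty ∧ Module.finrank ℝ ↥(vectorSpan ℝ F) = n - 1

/-- `Λ_k` : the subgroup of `ℝ^n` generated by all lattice points lying in faces of `P`
of dimension at most `k` (the `k`-skeleton).  It is a subgroup of the lattice `ℤ^n`. -/
def skeletonLattice {n : ℕ} (P : Set (Fin n → ℝ)) (k : ℕ) : AddSubgroup (Fin n → ℝ) :=
  AddSubgroup.closure
    {x | IsLatticePt x ∧
      ∃ F : Set (Fin n → ℝ), IsFaceOf P F ∧ Module.finrank ℝ ↥(vectorSpan ℝ F) ≤ k ∧ x ∈ F}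

/-- The lattice `ℤ^n`, as the subgroup of `ℝ^n` generated by (= consisting of) all
lattice points. -/
def latticeSubgroup (n : ℕ) : AddSubgroup (Fin n → ℝ) :=
  AddSubgroup.closure {x | IsLatticePt x}

/-- `x` is a (Demazure) root of `P` with facet `F` and inner normal `η`:
`x` is a lattice point in the relative interior of the facet `F`, and `η` is the
lattice point with `⟨η, v⟩ = -1` for all `v ∈ F`. -/
def IsRoot {n : ℕ} (P : Set (Fin n → ℝ)) (x : Fin n → ℝ) (F : Set (Fin n → ℝ))
    (η : Fin n → ℝ) : Prop :=
  IsLatticePt x ∧ IsFacetOf P F ∧ x ∈ intrinsicInterior ℝ F ∧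
    IsLatticePt η ∧ ∀ v ∈ F, dotProd η v = -1

section ConvexGeometry

open scoped Topology

section IntrinsicInterior

variable {E X : Type*} [AddCommGroup E] [Module ℝ E] [TopologicalSpace E] [ContinuousSMul ℝ E]
  [TopologicalSpace X] [AddTorsor E X] [IsTopologicalAddTorsor X] {s : Set X} {x v : X}

lemma eventually_lineMap_mem_of_mem_intrinsicInterior (hx : x ∈ intrinsicInterior ℝ s)
    (hv : v ∈ s) : ∀ᶠ t in 𝓝 (0 : ℝ), AffineMap.lineMap x v t ∈ s := by
  obtain ⟨x, hxs, rfl⟩ := mem_intrinsicInterior.1 hx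
  let γ : ℝ → affineSpan ℝ s := fun t =>
    ⟨AffineMap.lineMap (x : X) v t, AffineMap.lineMap_mem t x.2 (subset_affineSpan ℝ s hv)⟩
  have hγ : Continuous γ := AffineMap.lineMap_continuous.subtype_mk _
  have hγ0 : γ 0 = x := Subtype.ext (AffineMap.lineMap_apply_zero _ _)
  exact hγ.continuousAt (hγ0.symm ▸ mem_interior_iff_mem_nhds.1 hxs)

lemma apply_eq_of_isMinOn_of_mem_intrinsicInterior {f : X →ᵃ[ℝ] ℝ} (hf : IsMinOn f s x)
    (hx : x ∈ intrinsicInterior ℝ s) (hv : v ∈ s) : f v = f x := by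
  have hmin : IsLocalMin (AffineMap.lineMap (f x) (f v)) (0 : ℝ) :=
    (eventually_lineMap_mem_of_mem_intrinsicInterior hx hv).mono fun t ht => by
      simpa only [AffineMap.lineMap_apply_zero, f.apply_lineMap]
        using isMinOn_iff.1 hf _ ht
  exact sub_eq_zero.1 (hmin.hasDerivAt_eq_zero AffineMap.hasDerivAt_lineMap)

end IntrinsicInterior

lemma span_eq_top_of_zero_notMem_affineSpan {K E : Type*} [DivisionRing K] [AddCommGroup E]
    [Module K E] [FiniteDimensional K E] {s : Set E} (hs : s.Nonempty) (h0 : 0 ∉ affineSpan K s)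
    (hdim : Module.finrank K E ≤ Module.finrank K (vectorSpan K s) + 1) :
    Submodule.span K s = ⊤ := by
  obtain ⟨x, hx⟩ := hs
  have hle : vectorSpan K s ≤ Submodule.span K s := by
    rw [vectorSpan_def, Submodule.span_le]
    rintro _ ⟨v, hv, w, hw, rfl⟩
    exact sub_mem (Submodule.subset_span hv) (Submodule.subset_span hw)
  have hxs : x ∉ vectorSpan K s := fun hmem => h0 <| by
    simpa using vadd_mem_affineSpan_of_mem_affineSpan_of_mem_vectorSpan
      (subset_affineSpan K s hx) (neg_mem hmem)
  have hlt : vectorSpan K s < Submodule.span K s :=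
    lt_of_le_of_ne hle fun h => hxs (h ▸ Submodule.subset_span hx)
  have hrank := Submodule.finrank_lt_finrank_of_lt hlt
  exact Submodule.eq_top_of_finrank_eq
    (le_antisymm (Submodule.finrank_le _) (hdim.trans hrank))

end ConvexGeometry

section Pairing

variable {n : ℕ}

lemma dotProd_comm (v w : Fin n → ℝ) : dotProd v w = dotProd w v :=
  dotProduct_comm v w

lemma dotProd_add (w u v : Fin n → ℝ) : dotProd w (u + v) = dotProd w u + dotProd w v :=
  dotProduct_add w u v

lemma IsLatticePt.add {x y : Fin n → ℝ} (hx : IsLatticePt x) (hy : IsLatticePt y) :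
    IsLatticePt (x + y) := by
  intro i
  obtain ⟨a, ha⟩ := hx i
  obtain ⟨b, hb⟩ := hy i
  exact ⟨a + b, by simp [ha, hb]⟩

lemma IsLatticePt.exists_dotProd_eq_intCast {x y : Fin n → ℝ} (hx : IsLatticePt x)
    (hy : IsLatticePt y) : ∃ m : ℤ, dotProd x y = m := by
  choose a ha using hx
  choose b hb using hy
  exact ⟨∑ i, a i * b i, by simp [dotProd, ha, hb]⟩

end Pairing

section Polytope

variable {n : ℕ} {P F : Set (Fin n → ℝ)} {x η w : Fin n → ℝ}

lemma IsLatticePolytope.convex (hP : IsLatticePolytope P) : Convex ℝ P := by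
  obtain ⟨V, -, -, rfl⟩ := hP
  exact convex_convexHull ℝ V

lemma IsLatticePolytope.isClosed (hP : IsLatticePolytope P) : IsClosed P := by
  obtain ⟨V, hV, -, rfl⟩ := hP
  exact hV.isClosed_convexHull ℝ

lemma dualPolytope_convexHull (V : Set (Fin n → ℝ)) :
    dualPolytope (convexHull ℝ V) = dualPolytope V := by
  refine Set.Subset.antisymm (fun y hy v hv => hy v (subset_convexHull ℝ V hv)) fun y hy => ?_
  have hconv : Convex ℝ {v | -1 ≤ dotProductEquiv ℝ (Fin n) y v} :=
    convex_halfSpace_ge (LinearMap.isLinear _) _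
  have hV : convexHull ℝ V ⊆ {v | -1 ≤ dotProd y v} :=
    convexHull_min (fun v hv => (hy v hv).trans_eq (dotProd_comm v y)) hconv
  exact fun v hv => (hV hv).trans_eq (dotProd_comm y v)

lemma subset_dualPolytope_dualPolytope (V : Set (Fin n → ℝ)) :
    V ⊆ dualPolytope (dualPolytope V) := fun w hw p hp =>
  (hp w hw).trans_eq (dotProd_comm w p)

lemma dualPolytope_dualPolytope (hconv : Convex ℝ P) (hclosed : IsClosed P) (h0 : 0 ∈ P) :
    dualPolytope (dualPolytope P) = P := by
  refine Set.Subset.antisymm (fun p hp => ?_) (subset_dualPolytope_dualPolytope P)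
  by_contra hpP
  obtain ⟨f, u, hfp, hfP⟩ := geometric_hahn_banach_point_closed hconv hclosed hpP
  have hu : 0 < -u := by simpa using hfP 0 h0
  obtain ⟨w, hw⟩ := (dotProductEquiv ℝ (Fin n)).surjective ((-u)⁻¹ • f.toLinearMap)
  have hwf (v : Fin n → ℝ) : dotProd w v = (-u)⁻¹ * f v := LinearMap.congr_fun hw v
  have hwP : w ∈ dualPolytope P := fun v hv => by
    rw [dotProd_comm, hwf, le_inv_mul_iff₀ hu]
    linarith [hfP v hv]
  have hwp : -1 ≤ dotProd w p := hp w hwP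
  rw [hwf, le_inv_mul_iff₀ hu] at hwp
  linarith

lemma IsReflexive.exists_eq_dualPolytope (hP : IsReflexive P) :
    ∃ V : Set (Fin n → ℝ), (∀ w ∈ V, IsLatticePt w) ∧ P = dualPolytope V := by
  obtain ⟨hpoly, h0, V, -, hV, hdual⟩ := hP
  refine ⟨V, hV, ?_⟩
  rw [← dualPolytope_convexHull, ← hdual,
    dualPolytope_dualPolytope hpoly.convex hpoly.isClosed (interior_subset h0)]

lemma IsFacetOf.span_eq_top (hF : IsFacetOf P F) (hη : ∀ v ∈ F, dotProd η v = -1) :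
    Submodule.span ℝ F = ⊤ := by
  refine span_eq_top_of_zero_notMem_affineSpan hF.2.1 (fun h0 => ?_) ?_
  · have hspan : affineSpan ℝ F ≤ (affineSpan ℝ {(-1 : ℝ)}).comap
        (dotProductEquiv ℝ (Fin n) η).toAffineMap := affineSpan_le.2 fun v hv =>
      (AffineSubspace.mem_affineSpan_singleton ℝ ℝ).2 (hη v hv)
    simpa using hspan h0
  · rw [Module.finrank_fin_fun, hF.2.2]
    exact Nat.le_add_of_sub_le le_rfl

lemma IsFacetOf.eq_sep_dotProd_eq (hF : IsFacetOf P F) (hη : ∀ v ∈ F, dotProd η v = -1) :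
    F = {p ∈ P | dotProd η p = -1} := by
  refine Set.Subset.antisymm (fun p hp => ⟨hF.1.subset hp, hη p hp⟩) fun p ⟨hpP, hp⟩ => ?_
  have hspan := hF.span_eq_top hη
  obtain ⟨hexp, ⟨x, hx⟩, -⟩ := hF
  obtain ⟨l, rfl⟩ := hexp ⟨x, hx⟩
  have hl : l.toLinearMap = -l x • dotProductEquiv ℝ (Fin n) η :=
    LinearMap.ext_on hspan fun v hv => by
      have hlv : l v = l x := le_antisymm (hx.2 v hv.1) (hv.2 x hx.1)
      have hηv : η ⬝ᵥ v = -1 := hη v hv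
      simp [hlv, hηv]
  have hlp : l p = l x := by
    have hηp : η ⬝ᵥ p = -1 := hp
    simpa [hηp] using LinearMap.congr_fun hl p
  exact ⟨hpP, fun q hq => (hx.2 q hq).trans_eq hlp.symm⟩

lemma IsFacetOf.eq_normal_of_mem_dualPolytope (hF : IsFacetOf P F)
    (hη : ∀ v ∈ F, dotProd η v = -1) (hx : x ∈ intrinsicInterior ℝ F)
    (hw : w ∈ dualPolytope P) (hwx : dotProd w x = -1) : w = η := by
  have hmin : IsMinOn (dotProductEquiv ℝ (Fin n) w).toAffineMap F x := fun v hv =>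
    (hwx.trans_le (hw v (hF.1.subset hv))).trans_eq (dotProd_comm v w)
  refine (dotProductEquiv ℝ (Fin n)).injective
    (LinearMap.ext_on (hF.span_eq_top hη) fun v hv => ?_)
  calc dotProd w v = dotProd w x := apply_eq_of_isMinOn_of_mem_intrinsicInterior hmin hx hv
    _ = -1 := hwx
    _ = dotProd η v := (hη v hv).symm

end Polytope

namespace IsRoot

variable {n : ℕ} {P F : Set (Fin n → ℝ)} {x y η w : Fin n → ℝ}

lemma mem_facet (hx : IsRoot P x F η) : x ∈ F :=
  intrinsicInterior_subset hx.2.2.1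

lemma dotProd_normal_self (hx : IsRoot P x F η) : dotProd η x = -1 :=
  hx.2.2.2.2 x hx.mem_facet

lemma eq_normal_or_dotProd_nonneg (hx : IsRoot P x F η) (hw : w ∈ dualPolytope P)
    (hwl : IsLatticePt w) : w = η ∨ 0 ≤ dotProd w x := by
  have hge : -1 ≤ dotProd w x :=
    (hw x (hx.2.1.1.subset hx.mem_facet)).trans_eq (dotProd_comm x w)
  obtain ⟨hxl, hF, hxF, -, hη⟩ := hx
  obtain ⟨m, hm⟩ := hwl.exists_dotProd_eq_intCast hxl
  rw [hm] at hge ⊢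
  rcases (show -1 ≤ m by exact_mod_cast hge).eq_or_lt with rfl | hlt
  · exact .inl (hF.eq_normal_of_mem_dualPolytope hη hxF hw (by simpa using hm))
  · exact .inr (by exact_mod_cast hlt)

lemma add_mem_facet (hx : IsRoot P x F η) (hxy : dotProd η y = 0) (hmem : x + y ∈ P) :
    x + y ∈ F := by
  rw [hx.2.1.eq_sep_dotProd_eq hx.2.2.2.2]
  exact ⟨hmem, by rw [dotProd_add, hx.dotProd_normal_self, hxy, add_zero]⟩

end IsRoot

theorem orthogonal_roots_sum_mem_general {n : ℕ} {V Fx Fy : Set (Fin n → ℝ)}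
    {x y ηx ηy : Fin n → ℝ} (hV : ∀ w ∈ V, IsLatticePt w)
    (hx : IsRoot (dualPolytope V) x Fx ηx) (hy : IsRoot (dualPolytope V) y Fy ηy)
    (hxy : dotProd ηx y = 0) (hyx : dotProd ηy x = 0) :
    IsLatticePt (x + y) ∧ x + y ∈ Fx ∩ Fy := by
  have hmem : x + y ∈ dualPolytope V := by
    intro w hw
    have hwdual : w ∈ dualPolytope (dualPolytope V) := subset_dualPolytope_dualPolytope V hw
    rw [dotProd_add]
    rcases hx.eq_normal_or_dotProd_nonneg hwdual (hV w hw) with rfl | hwx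
    · rw [hx.dotProd_normal_self, hxy, add_zero]
    rcases hy.eq_normal_or_dotProd_nonneg hwdual (hV w hw) with rfl | hwy
    · rw [hy.dotProd_normal_self, hyx, zero_add]
    · linarith
  exact ⟨hx.1.add hy.1, hx.add_mem_facet hxy hmem,
    add_comm y x ▸ hy.add_mem_facet hyx (add_comm x y ▸ hmem)⟩

/-- If `x, y` is an orthogonal pair of roots of a reflexive polytope `P`
(`⟨ηₓ, y⟩ = 0 = ⟨η_y, x⟩`), then `x + y` is a lattice point lying in `Fₓ ∩ F_y`. -/
theorem orthogonal_roots_sum_mem {n : ℕ} (P : Set (Fin n → ℝ)) (hP : IsReflexive P)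
    (x Fx ηx : _) (hx : IsRoot P x Fx ηx)
    (y Fy ηy : _) (hy : IsRoot P y Fy ηy)
    (hxy : dotProd ηx y = 0) (hyx : dotProd ηy x = 0) :
    IsLatticePt (x + y) ∧ x + y ∈ Fx ∩ Fy := by
  obtain ⟨V, hV, rfl⟩ := hP.exists_eq_dualPolytope
  exact orthogonal_roots_sum_mem_general hV hx hy hxy hyx
end

section
/- Let Q ⊆ ℝ² be a reflexive polygon with respect to ℤ², and let u, v be two distinct lattice points lying on a common edge of Q such that no lattice point lies strictly between u and v on the segment [u, v]. Then {u, v} is a ℤ-basis of the lattice ℤ². -/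
/-!
Let `F` be a proper face of `P`, cut out by `⟨·, y⟩ ≤ c`. Boundedness of `P*` forces `c > 0`, so
`-y / c` lies in the dual face `{w ∈ P* | ⟨·, w⟩ = -1 on F}`. This is a nonempty extreme subset of
`P*`, hence contains one of the lattice points `w` spanning `P*`.

In the plane, the equations `⟨u, w⟩ = ⟨v, w⟩ = -1` give `v - u = det (u, v) • (w₁, -w₀)`, so lattice
points cut `[u, v]` into `|det (u, v)|` equal pieces. If no lattice point lies strictly between `u`
and `v`, then `det (u, v) = ±1`.
-/

lemma exists_mem_of_isExtreme_convexHull {𝕜 E : Type*} [Semiring 𝕜] [PartialOrder 𝕜]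
    [IsOrderedRing 𝕜] [AddCommGroup E] [Module 𝕜 E] {V B : Set E}
    (hB : IsExtreme 𝕜 (convexHull 𝕜 V) B) (hne : B.Nonempty) : ∃ x ∈ V, x ∈ B := by
  by_contra! hV
  have hsub : convexHull 𝕜 V ⊆ convexHull 𝕜 V \ B :=
    convexHull_min (fun x hx => ⟨subset_convexHull 𝕜 V hx, hV x hx⟩)
      (hB.convex_sdiff (convex_convexHull 𝕜 V))
  obtain ⟨x, hx⟩ := hne
  exact (hsub (hB.subset hx)).2 hx

section DualFace

open Matrix

variable {n : ℕ} {P F : Set (Fin n → ℝ)} {y : Fin n → ℝ}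

lemma dotProd_eq_dotProduct (x y : Fin n → ℝ) : dotProd x y = x ⬝ᵥ y := rfl

/-- The face of the dual polytope `P*` dual to `F ⊆ P`, consisting of the `y ∈ P*` whose
supporting half-space `⟨·, y⟩ ≥ -1` of `P` is tight along `F`. A lattice point of it puts `F` at
lattice height one. -/
def dualFace (P F : Set (Fin n → ℝ)) : Set (Fin n → ℝ) :=
  {y ∈ dualPolytope P | ∀ x ∈ F, dotProd x y = -1}

lemma isExtreme_dualFace (hFP : F ⊆ P) : IsExtreme ℝ (dualPolytope P) (dualFace P F) := by
  refine ⟨fun y hy => hy.1, ?_⟩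
  rintro y hy z hz _ ⟨-, hF⟩ ⟨a, b, ha, hb, hab, rfl⟩
  refine ⟨hy, fun x hx => le_antisymm ?_ (hy x (hFP hx))⟩
  have hxF : a * dotProd x y + b * dotProd x z = -1 := by
    simpa only [dotProd_eq_dotProduct, dotProduct_add, dotProduct_smul, smul_eq_mul] using hF x hx
  nlinarith [hz x (hFP hx)]

lemma eq_zero_of_isBounded_dualPolytope (hP : Bornology.IsBounded (dualPolytope P))
    (hy : ∀ x ∈ P, 0 ≤ dotProd x y) : y = 0 := by
  by_contra hy0
  -- The dual would contain the whole ray spanned by `y`.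
  obtain ⟨C, hC⟩ := hP.exists_norm_le
  obtain ⟨k, hk⟩ := Archimedean.arch (C + 1) (norm_pos_iff.2 hy0)
  have hmem : k • y ∈ dualPolytope P := fun x hx => by
    rw [dotProd_eq_dotProduct, dotProduct_smul]
    exact neg_one_lt_zero.le.trans (nsmul_nonneg (hy x hx) k)
  have hle := hC _ hmem
  rw [RCLike.norm_nsmul ℝ] at hle
  linarith

lemma IsFaceOf.dualFace_nonempty (hF : IsFaceOf P F) (hFP : F ≠ P)
    (hP : Bornology.IsBounded (dualPolytope P)) : (dualFace P F).Nonempty := by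
  obtain rfl | ⟨u, hu⟩ := F.eq_empty_or_nonempty
  · exact ⟨0, by simp [dualFace, dualPolytope, dotProd]⟩
  obtain ⟨l, hl⟩ := hF ⟨u, hu⟩
  obtain ⟨y, hy⟩ := (dotProductEquiv ℝ (Fin n)).surjective l
  have hly (x : Fin n → ℝ) : l x = dotProd x y := by
    rw [dotProd_eq_dotProduct, dotProduct_comm]
    exact (LinearMap.congr_fun hy x).symm
  simp only [hly] at hl
  have hmax : ∀ x ∈ P, dotProd x y ≤ dotProd u y := (hl ▸ hu).2
  have hpos : 0 < dotProd u y := by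
    by_contra! hneg
    have hy0 : -y = 0 := eq_zero_of_isBounded_dualPolytope hP fun x hx => by
      simpa [dotProd_eq_dotProduct] using (hmax x hx).trans hneg
    exact hFP (by simp [hl, neg_eq_zero.1 hy0, dotProd])
  have hscaled (x : Fin n → ℝ) :
      dotProd x (-(dotProd u y)⁻¹ • y) = -(dotProd x y / dotProd u y) := by
    simp only [dotProd_eq_dotProduct, dotProduct_smul, smul_eq_mul]
    ring
  refine ⟨-(dotProd u y)⁻¹ • y, fun x hx => ?_, fun x hx => ?_⟩
  · rw [hscaled, neg_le_neg_iff, div_le_one hpos]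
    exact hmax x hx
  · have hxu : dotProd x y = dotProd u y := by
      rw [hl] at hx hu
      exact le_antisymm (hu.2 x hx.1) (hx.2 u hu.1)
    rw [hscaled, hxu, div_self hpos.ne']

theorem IsFaceOf.exists_isLatticePt_mem_dualFace (hF : IsFaceOf P F) (hFP : F ≠ P)
    (hP : IsLatticePolytope (dualPolytope P)) : ∃ w, IsLatticePt w ∧ w ∈ dualFace P F := by
  obtain ⟨V, hVfin, hV, hPV⟩ := hP
  have hne : (dualFace P F).Nonempty := hF.dualFace_nonempty hFP <| by
    rw [hPV, isBounded_convexHull]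
    exact hVfin.isBounded
  obtain ⟨w, hwV, hw⟩ :=
    exists_mem_of_isExtreme_convexHull (hPV ▸ isExtreme_dualFace hF.subset) hne
  exact ⟨w, hV w hwV, hw⟩

end DualFace

section Determinant

open Matrix

variable {R : Type*} [CommRing R]

lemma sub_eq_det_smul_of_dotProduct_eq_neg_one {a b p : Fin 2 → R} (ha : a ⬝ᵥ p = -1)
    (hb : b ⬝ᵥ p = -1) : b - a = (of ![a, b]).det • ![p 1, -p 0] := by
  simp only [dotProduct, Fin.sum_univ_two] at ha hb
  have hdet : (of ![a, b]).det = a 0 * b 1 - a 1 * b 0 := det_fin_two _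
  rw [hdet]
  refine funext (Fin.forall_fin_two.2 ⟨?_, ?_⟩)
  · change b 0 - a 0 = (a 0 * b 1 - a 1 * b 0) * p 1
    linear_combination b 0 * ha - a 0 * hb
  · change b 1 - a 1 = (a 0 * b 1 - a 1 * b 0) * -p 0
    linear_combination b 1 * ha - a 1 * hb

lemma existsUnique_smul_add_smul_of_isUnit_det {a b : Fin 2 → R} (h : IsUnit (of ![a, b]).det)
    (c : Fin 2 → R) : ∃! q : R × R, c = q.1 • a + q.2 • b := by
  have hA : IsUnit (of ![a, b]) := (isUnit_iff_isUnit_det _).2 h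
  have hbij : Function.Bijective (· ᵥ* of ![a, b]) :=
    ⟨vecMul_injective_of_isUnit hA, vecMul_surjective_iff_isUnit.2 hA⟩
  refine ((finTwoArrowEquiv R).existsUnique_congr fun q => ?_).1 (hbij.existsUnique c)
  rw [vecMul_eq_sum, Fin.sum_univ_two, eq_comm]
  rfl

end Determinant

section Lattice

open Matrix

variable {n : ℕ}

lemma isLatticePt_iff_exists_intCast {x : Fin n → ℝ} :
    IsLatticePt x ↔ ∃ a : Fin n → ℤ, x = Int.cast ∘ a := by
  simp only [IsLatticePt, funext_iff, Function.comp_apply, Classical.skolem]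

lemma isUnit_of_sub_eq_smul {u v e : Fin n → ℝ} (hu : IsLatticePt u) (he : IsLatticePt e)
    (huv : u ≠ v) (hprim : ∀ w, IsLatticePt w → w ∉ openSegment ℝ u v) {m : ℤ}
    (hm : v - u = (m : ℝ) • e) : IsUnit m := by
  have hm0 : m ≠ 0 := by
    rintro rfl
    exact huv (sub_eq_zero.1 (by simpa using hm)).symm
  by_contra hunit
  have hm1 : 1 < |m| :=
    (Int.one_le_abs hm0).lt_of_ne fun h => hunit (Int.isUnit_iff_abs_eq.2 h.symm)
  have hm1' : (1 : ℝ) < |(m : ℝ)| := by exact_mod_cast hm1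
  refine hprim (AffineMap.lineMap u v |(m : ℝ)|⁻¹) ?_ ?_
  · have hsign : |(m : ℝ)|⁻¹ * m = m.sign := by
      rw [inv_mul_eq_iff_eq_mul₀ (by positivity), mul_comm]
      exact_mod_cast (Int.sign_mul_abs m).symm
    obtain ⟨a, rfl⟩ := isLatticePt_iff_exists_intCast.1 hu
    obtain ⟨d, rfl⟩ := isLatticePt_iff_exists_intCast.1 he
    refine isLatticePt_iff_exists_intCast.2 ⟨m.sign • d + a, ?_⟩
    rw [AffineMap.lineMap_apply, vsub_eq_sub, hm, smul_smul, hsign]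
    ext i
    simp
  · rw [openSegment_eq_image_lineMap]
    exact Set.mem_image_of_mem _ ⟨by positivity, inv_lt_one_of_one_lt₀ hm1'⟩

lemma intCast_comp_eq_smul_add_smul_iff {a b c : Fin n → ℤ} {s t : ℤ} :
    (Int.cast ∘ c : Fin n → ℝ) = (s : ℝ) • (Int.cast ∘ a) + (t : ℝ) • (Int.cast ∘ b) ↔
      c = s • a + t • b := by
  simp only [funext_iff, Pi.add_apply, Pi.smul_apply, Function.comp_apply, smul_eq_mul]
  norm_cast

lemma dotProd_intCast_comp (a b : Fin n → ℤ) :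
    dotProd (Int.cast ∘ a) (Int.cast ∘ b) = ((a ⬝ᵥ b : ℤ) : ℝ) :=
  ((Int.castRingHom ℝ).map_dotProduct a b).symm

theorem existsUnique_smul_add_smul_of_dotProd_eq_neg_one {u v w : Fin 2 → ℝ} (hu : IsLatticePt u)
    (hv : IsLatticePt v) (hw : IsLatticePt w) (huv : u ≠ v) (huw : dotProd u w = -1)
    (hvw : dotProd v w = -1) (hprim : ∀ x, IsLatticePt x → x ∉ openSegment ℝ u v)
    {z : Fin 2 → ℝ} (hz : IsLatticePt z) :
    ∃! p : ℤ × ℤ, z = (p.1 : ℝ) • u + (p.2 : ℝ) • v := by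
  obtain ⟨a, rfl⟩ := isLatticePt_iff_exists_intCast.1 hu
  obtain ⟨b, rfl⟩ := isLatticePt_iff_exists_intCast.1 hv
  obtain ⟨p, rfl⟩ := isLatticePt_iff_exists_intCast.1 hw
  obtain ⟨c, rfl⟩ := isLatticePt_iff_exists_intCast.1 hz
  rw [dotProd_intCast_comp] at huw hvw
  have hsub : b - a = (of ![a, b]).det • ![p 1, -p 0] :=
    sub_eq_det_smul_of_dotProduct_eq_neg_one (mod_cast huw) (mod_cast hvw)
  have hdet : IsUnit (of ![a, b]).det := by
    refine isUnit_of_sub_eq_smul (e := Int.cast ∘ ![p 1, -p 0]) hu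
      (isLatticePt_iff_exists_intCast.2 ⟨_, rfl⟩) huv hprim ?_
    ext i
    simp only [Pi.sub_apply, Pi.smul_apply, Function.comp_apply, smul_eq_mul]
    exact_mod_cast congrFun hsub i
  simp only [intCast_comp_eq_smul_add_smul_iff]
  exact existsUnique_smul_add_smul_of_isUnit_det hdet c

end Lattice

lemma vectorSpan_eq_top_of_nonempty_interior {V : Type*} [NormedAddCommGroup V] [NormedSpace ℝ V]
    {s : Set V} (hs : (interior s).Nonempty) : vectorSpan ℝ s = ⊤ :=
  AffineSubspace.vectorSpan_eq_top_of_affineSpan_eq_top ℝ V V <|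
    affineSpan_eq_top_of_nonempty_interior (hs.mono (interior_mono (subset_convexHull ℝ s)))

theorem primitive_edge_segment_basis_general {Q E : Set (Fin 2 → ℝ)}
    (hQ : IsLatticePolytope (dualPolytope Q)) (hE : IsFaceOf Q E) (hEQ : E ≠ Q)
    {u v : Fin 2 → ℝ} (hu : IsLatticePt u) (hv : IsLatticePt v) (huv : u ≠ v)
    (huE : u ∈ E) (hvE : v ∈ E) (hprim : ∀ w, IsLatticePt w → w ∉ openSegment ℝ u v)
    {z : Fin 2 → ℝ} (hz : IsLatticePt z) :
    ∃! p : ℤ × ℤ, z = (p.1 : ℝ) • u + (p.2 : ℝ) • v := by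
  obtain ⟨w, hw, -, hwE⟩ := hE.exists_isLatticePt_mem_dualFace hEQ hQ
  exact existsUnique_smul_add_smul_of_dotProd_eq_neg_one hu hv hw huv (hwE u huE) (hwE v hvE)
    hprim hz

/-- For a reflexive polygon `Q ⊆ ℝ²`, the endpoints of a primitive lattice segment on an
edge of `Q` form a `ℤ`-basis of the lattice `ℤ²`: every lattice point is uniquely an
integral combination of `u` and `v`. -/
theorem primitive_edge_segment_basis (Q : Set (Fin 2 → ℝ)) (hQ : IsReflexive Q)
    (u v : Fin 2 → ℝ) (hu : IsLatticePt u) (hv : IsLatticePt v) (huv : u ≠ v)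
    (E : Set (Fin 2 → ℝ)) (hE : IsFaceOf Q E)
    (hEdim : Module.finrank ℝ ↥(vectorSpan ℝ E) = 1)
    (huE : u ∈ E) (hvE : v ∈ E)
    (hprim : ∀ w : Fin 2 → ℝ, IsLatticePt w → w ∈ openSegment ℝ u v → False) :
    ∀ z : Fin 2 → ℝ, IsLatticePt z →
      ∃! p : ℤ × ℤ, z = (p.1 : ℝ) • u + (p.2 : ℝ) • v := by
  have hEQ : E ≠ Q := by
    rintro rfl
    rw [vectorSpan_eq_top_of_nonempty_interior ⟨0, hQ.2.1⟩, finrank_top] at hEdim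
    simp at hEdim
  exact fun z hz => primitive_edge_segment_basis_general hQ.2.2 hE hEQ hu hv huv huE hvE hprim hz
end
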